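/- arXiv:1110.5515 — 5 statements merged into one kernel-verified Lean document; each statement's English description precedes it below -/
import Mathlib

section
/- Let $F$ be a field, let $n \ge 1$, and let $t_0, t_1, \dots, t_n$ be pairwise distinct elements of $F$. Then for every natural number $j \ge 0$ one has $\sum_{k=0}^{n} \frac{t_k^{n+j}}{\prod_{\ell \neq k}(t_k - t_\ell)} = h_j(t_0,\dots,t_n)$, where $h_j(t_0,\dots,t_n) = \sum_{0 \le i_1 \le i_2 \le \dots \le i_j \le n} t_{i_1} t_{i_2} \cdots t_{i_j}$ is the complete homogeneous symmetric polynomial of degree $j$ (the sum of all monomials of degree $j$ in $t_0,\dots,t_n$, with $h_0 = 1$). -/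
/-- The complete homogeneous symmetric polynomial of degree `j` in the variables
`t i`, `i : ι`: the sum of all monomials of degree `j` (with `h 0 = 1`). -/
noncomputable def completeHomogeneous {ι : Type*} [Fintype ι] [DecidableEq ι]
    {F : Type*} [CommRing F] (j : ℕ) (t : ι → F) : F :=
  ∑ mlt ∈ (Finset.univ : Finset ι).sym j, ((mlt : Multiset ι).map t).prod

/-- Splitting the multisets of size `j + 1` on `insert a s` by whether they contain `a`. -/
lemma Finset.sum_sym_insert_succ {ι R : Type*} [DecidableEq ι] [CommSemiring R] {s : Finset ι}
    {a : ι} (ha : a ∉ s) (t : ι → R) (j : ℕ) :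
    ∑ m ∈ (insert a s).sym (j + 1), ((m : Multiset ι).map t).prod =
      ∑ m ∈ s.sym (j + 1), ((m : Multiset ι).map t).prod +
        t a * ∑ m ∈ (insert a s).sym j, ((m : Multiset ι).map t).prod := by
  have hunion : (insert a s).sym (j + 1) =
      s.sym (j + 1) ∪ ((insert a s).sym j).image (Sym.cons a) := by
    ext m
    simp only [Finset.mem_union, Finset.mem_image, Finset.mem_sym_iff, Finset.mem_insert]
    constructor
    · intro h
      by_cases ham : a ∈ m
      · refine Or.inr ⟨m.erase a ham, fun b hb => h b ?_, Sym.cons_erase ham⟩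
        rw [← Sym.cons_erase ham]
        exact Sym.mem_cons_of_mem hb
      · exact Or.inl fun b hb => (h b hb).resolve_left fun hba => ham (hba ▸ hb)
    · rintro (h | ⟨m, h, rfl⟩) b hb
      · exact Or.inr (h b hb)
      · exact (Sym.mem_cons.mp hb).elim Or.inl (h b)
  have hdisj : Disjoint (s.sym (j + 1)) (((insert a s).sym j).image (Sym.cons a)) := by
    refine Finset.disjoint_left.mpr fun m hm hm' => ?_
    obtain ⟨m, -, rfl⟩ := Finset.mem_image.mp hm'
    exact ha (Finset.mem_sym_iff.mp hm a (Sym.mem_cons_self a m))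
  rw [hunion, Finset.sum_union hdisj, Finset.mul_sum,
    Finset.sum_image fun _ _ _ _ h => (Sym.cons_inj_right _ _ _).mp h]
  simp only [Sym.coe_cons, Multiset.map_cons, Multiset.prod_cons]

/-- The recurrence satisfied by the divided differences of the monomials. -/
lemma Finset.sum_insert_pow_succ_div_prod_sub {ι F : Type*} [DecidableEq ι] [Field F]
    {s : Finset ι} {a : ι} (ha : a ∉ s) {t : ι → F} (ht : Function.Injective t) (m : ℕ) :
    ∑ k ∈ insert a s, t k ^ (m + 1) / ∏ l ∈ (insert a s).erase k, (t k - t l) =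
      ∑ k ∈ s, t k ^ m / ∏ l ∈ s.erase k, (t k - t l) +
        t a * ∑ k ∈ insert a s, t k ^ m / ∏ l ∈ (insert a s).erase k, (t k - t l) := by
  rw [← sub_eq_iff_eq_add, Finset.mul_sum, ← Finset.sum_sub_distrib, Finset.sum_insert ha,
    pow_succ', mul_div_assoc, sub_self, zero_add]
  refine Finset.sum_congr rfl fun k hk => ?_
  have hak : a ≠ k := fun h => ha (h ▸ hk)
  have hsub : t k - t a ≠ 0 := sub_ne_zero.mpr (ht.ne hak.symm)
  rw [Finset.erase_insert_of_ne hak,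
    Finset.prod_insert fun h => ha (Finset.mem_of_mem_erase h), pow_succ', mul_div_assoc,
    ← sub_mul, ← div_div, div_right_comm, mul_div_cancel₀ _ hsub]

/-- The divided difference of `x ^ (n + j)` at the `n + 1` nodes `t k`, `k ∈ s`, is the complete
homogeneous symmetric polynomial of degree `j` in these nodes. -/
lemma Finset.sum_pow_div_prod_sub_eq_sum_sym {ι F : Type*} [DecidableEq ι] [Field F]
    {t : ι → F} (ht : Function.Injective t) (s : Finset ι) {n : ℕ} (hs : s.card = n + 1) (j : ℕ) :
    ∑ k ∈ s, t k ^ (n + j) / ∏ l ∈ s.erase k, (t k - t l) =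
      ∑ m ∈ s.sym j, ((m : Multiset ι).map t).prod := by
  induction s using Finset.induction_on generalizing n j with
  | empty => simp at hs
  | insert a s ha ih =>
    induction j with
    | zero =>
      have h := Lagrange.leadingCoeff_eq_sum (s := insert a s) (v := t)
        (P := Polynomial.X ^ n) ht.injOn (by simp [hs])
      rw [Finset.sym_zero, Finset.sum_singleton]
      change _ = (Multiset.map t 0).prod
      simpa using h.symm
    | succ j hj =>
      rw [← add_assoc, Finset.sum_insert_pow_succ_div_prod_sub ha ht, hj,
        Finset.sum_sym_insert_succ ha]
      congr 1
      rw [Finset.card_insert_of_notMem ha, Nat.add_right_cancel_iff] at hs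
      cases n with
      | zero => simp [Finset.card_eq_zero.mp hs]
      | succ n => rw [← ih hs (j + 1), add_right_comm, add_assoc]

theorem localization_Pn_higher_degree {F : Type*} [Field F] (n : ℕ) (hn : 1 ≤ n)
    (t : Fin (n + 1) → F) (ht : Function.Injective t) (j : ℕ) :
    ∑ k : Fin (n + 1), t k ^ (n + j) / ∏ l ∈ Finset.univ.erase k, (t k - t l) =
      completeHomogeneous j t :=
  Finset.sum_pow_div_prod_sub_eq_sum_sym ht Finset.univ (by simp) j
end

section
/- Let $F$ be a field, let $0 < m < n$, and let $t_1, \dots, t_n$ be pairwise distinct elements of $F$. Let $W \in F[x_1,\dots,x_m]$ be a symmetric polynomial (invariant under all permutations of the variables) which is homogeneous of degree $d$ with $d < m(n-m)$. For an $m$-element subset $\lambda \subseteq \{1,\dots,n\}$ write $W(t_\lambda)$ for the evaluation of $W$ at the family $(t_i)_{i \in \lambda}$ (well defined by symmetry of $W$), and write $e_\lambda = \prod_{k \in \lambda,\; \ell \notin \lambda} (t_\ell - t_k)$. Then $\sum_{\lambda \subseteq \{1,\dots,n\},\ |\lambda| = m} \frac{W(t_\lambda)}{e_\lambda} = 0$.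 -/
open Finset

/-- The divided difference of a monomial of degree less than `#ι - 1` vanishes. -/
theorem sum_pow_mul_inv_prod_sub_eq_zero {F ι : Type*} [Field F] [Fintype ι] [DecidableEq ι]
    {t : ι → F} (ht : Function.Injective t) {a : ℕ} (ha : a < Fintype.card ι - 1) :
    ∑ i, t i ^ a * (∏ l ∈ univ.erase i, (t l - t i))⁻¹ = 0 := by
  have hdeg : ((-Polynomial.X : Polynomial F) ^ a).degree ≤ (a : WithBot ℕ) := by
    compute_degree
    exact le_rfl
  have key := Lagrange.coeff_eq_sum (s := univ) (v := fun i => -t i)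
    (P := (-Polynomial.X : Polynomial F) ^ a)
    (neg_injective.comp ht).injOn (hdeg.trans_lt (by rw [card_univ]; norm_cast; lia))
  rw [Polynomial.coeff_eq_zero_of_degree_lt
    (hdeg.trans_lt (by rw [card_univ]; norm_cast))] at key
  rw [key]
  refine sum_congr rfl fun i _ => ?_
  simp [div_eq_mul_inv, neg_add_eq_sub]

/-- The multivariate divided difference of a polynomial of low total degree vanishes. -/
theorem sum_eval_mul_prod_inv_prod_sub_eq_zero {F ι σ : Type*} [Field F] [Fintype ι]
    [DecidableEq ι] [Fintype σ] [DecidableEq σ] {t : ι → F} (ht : Function.Injective t)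
    {G : MvPolynomial σ F} (hG : G.totalDegree < (Fintype.card ι - 1) * Fintype.card σ) :
    ∑ f : σ → ι, MvPolynomial.eval (t ∘ f) G *
      ∏ i, (∏ l ∈ univ.erase (f i), (t l - t (f i)))⁻¹ = 0 := by
  simp_rw [MvPolynomial.eval_eq', sum_mul]
  rw [sum_comm]
  refine sum_eq_zero fun a ha => ?_
  obtain ⟨i, hi⟩ := G.exists_degree_lt _ hG ha
  simp_rw [mul_assoc, ← prod_mul_distrib, ← mul_sum, Function.comp_apply]
  rw [← Fintype.piFinset_univ, sum_prod_piFinset univ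
    fun i j => t j ^ a i * (∏ l ∈ univ.erase j, (t l - t j))⁻¹,
    prod_eq_zero (mem_univ i) (sum_pow_mul_inv_prod_sub_eq_zero ht hi), mul_zero]

theorem MvPolynomial.totalDegree_det_vandermonde_X_le (R : Type*) [CommRing R]
    [Nontrivial R] (m : ℕ) :
    (Matrix.vandermonde (X : Fin m → MvPolynomial (Fin m) R)).det.totalDegree ≤
      ∑ i : Fin m, (m - 1 - i) := by
  rw [Matrix.det_vandermonde]
  refine (totalDegree_finsetProd _ _).trans (sum_le_sum fun i _ => ?_)
  refine (totalDegree_finsetProd _ _).trans ?_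
  refine (sum_le_card_nsmul _ _ 1 fun j _ => ?_).trans (by simp)
  exact (totalDegree_sub _ _).trans (by simp)

/-- Up to a sign depending only on `m`, the discriminant is the square of the Vandermonde
determinant. -/
theorem prod_prod_erase_sub_eq_det_vandermonde_sq {R : Type*} [CommRing R] {m : ℕ}
    (v : Fin m → R) :
    ∏ i, ∏ j ∈ univ.erase i, (v j - v i) =
      (∏ i : Fin m, ∏ _j ∈ Ioi i, (-1 : R)) * (Matrix.vandermonde v).det ^ 2 := by
  have hsplit (i : Fin m) : univ.erase i = Iio i ∪ Ioi i := by ext; simp [lt_or_lt_iff_ne]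
  have hdisj (i : Fin m) : Disjoint (Iio i) (Ioi i) :=
    disjoint_left.2 fun j hj hj' => (mem_Iio.1 hj).asymm (mem_Ioi.1 hj')
  simp_rw [hsplit, prod_union (hdisj _), prod_mul_distrib]
  rw [Matrix.det_vandermonde, sq, ← mul_assoc]
  congr 1
  rw [prod_comm' (t' := univ) (s' := fun j => Ioi j) (by simp), ← prod_mul_distrib]
  refine prod_congr rfl fun i _ => ?_
  rw [← prod_mul_distrib]
  exact prod_congr rfl fun j _ => by ring

/-- Expanding one factor of the squared Vandermonde determinant over the symmetric group. -/
theorem MvPolynomial.IsSymmetric.sum_perm_eval_mul_det_vandermonde {R : Type*} [CommRing R]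
    {m : ℕ} {W : MvPolynomial (Fin m) R} (hW : W.IsSymmetric) (v : Fin m → R) :
    ∑ σ : Equiv.Perm (Fin m), eval (v ∘ σ)
      (W * (Matrix.vandermonde X).det * ∏ i : Fin m, X i ^ (i : ℕ)) =
      eval v W * (Matrix.vandermonde v).det ^ 2 := by
  have hdet (u : Fin m → R) :
      eval u (Matrix.vandermonde X).det = (Matrix.vandermonde u).det := by
    simp [Matrix.det_vandermonde]
  have hWσ (σ : Equiv.Perm (Fin m)) : eval (v ∘ σ) W = eval v W := by
    rw [← eval_rename, hW σ]
  have hvσ (σ : Equiv.Perm (Fin m)) : (Matrix.vandermonde (v ∘ σ)).det =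
      Equiv.Perm.sign σ * (Matrix.vandermonde v).det :=
    Matrix.det_permute σ (Matrix.vandermonde v)
  simp only [map_mul, hdet, hWσ, hvσ, map_prod, map_pow, eval_X, Function.comp_apply]
  have hexp : (Matrix.vandermonde v).det =
      ∑ σ : Equiv.Perm (Fin m), (Equiv.Perm.sign σ : R) * ∏ i, v (σ i) ^ (i : ℕ) :=
    Matrix.det_apply' _
  rw [sq, ← mul_assoc]
  conv_rhs => rw [hexp, mul_sum]
  rw [← hexp]
  exact sum_congr rfl fun σ _ => by ring

theorem Finset.prod_orderEmbOfFin {ι M : Type*} [LinearOrder ι] [CommMonoid M] {m : ℕ}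
    (s : Finset ι) (hs : s.card = m) (f : ι → M) :
    ∏ i, f (s.orderEmbOfFin hs i) = ∏ k ∈ s, f k := by
  conv_rhs => rw [← s.map_orderEmbOfFin_univ hs, prod_map]
  rfl

/-- The product of the weights of a fixed point splits into the discriminant of `s` and the
equivariant Euler class. -/
theorem prod_orderEmbOfFin_prod_erase {ι R : Type*} [Fintype ι] [LinearOrder ι] [CommRing R]
    {m : ℕ} (t : ι → R) (s : Finset ι) (hs : s.card = m) :
    ∏ i, ∏ l ∈ univ.erase (s.orderEmbOfFin hs i), (t l - t (s.orderEmbOfFin hs i)) =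
      (∏ i, ∏ j ∈ univ.erase i, (t (s.orderEmbOfFin hs j) - t (s.orderEmbOfFin hs i))) *
        ∏ k ∈ s, ∏ l ∈ sᶜ, (t l - t k) := by
  rw [← s.prod_orderEmbOfFin hs, ← prod_mul_distrib]
  refine prod_congr rfl fun i _ => ?_
  have hmem : s.orderEmbOfFin hs i ∈ s := s.orderEmbOfFin_mem hs i
  have hmap : (univ.erase i).map (s.orderEmbOfFin hs).toEmbedding =
      s.erase (s.orderEmbOfFin hs i) := by
    rw [map_erase, map_orderEmbOfFin_univ]
    rfl
  have hsplit : univ.erase (s.orderEmbOfFin hs i) = s.erase (s.orderEmbOfFin hs i) ∪ sᶜ := by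
    ext x
    by_cases hx : x ∈ s
    · simp [hx]
    · simp [hx, ne_of_mem_of_not_mem hmem hx |>.symm]
  rw [hsplit, prod_union (disjoint_compl_right.mono_left (erase_subset _ _)), ← hmap, prod_map]
  rfl

/-- Every injective tuple is uniquely an ordered enumeration of a subset followed by a
permutation. -/
theorem sum_subset_sum_perm_eq_sum_fun {ι M : Type*} [Fintype ι] [LinearOrder ι]
    [AddCommMonoid M] {m : ℕ} (H : (Fin m → ι) → M) (hH : ∀ f, ¬ Function.Injective f → H f = 0) :
    ∑ s : {s : Finset ι // s.card = m}, ∑ σ : Equiv.Perm (Fin m),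
      H (s.1.orderEmbOfFin s.2 ∘ σ) = ∑ f, H f := by
  rw [← Fintype.sum_prod_type']
  refine Fintype.sum_of_injective
    (fun p : {s : Finset ι // s.card = m} × Equiv.Perm (Fin m) =>
      p.1.1.orderEmbOfFin p.1.2 ∘ p.2) ?_ _ _ ?_ fun _ => rfl
  · rintro ⟨⟨s, hs⟩, σ⟩ ⟨⟨s', hs'⟩, σ'⟩ h
    have hrange := congrArg Set.range h
    simp only [EquivLike.range_comp, range_orderEmbOfFin, coe_inj] at hrange
    subst hrange
    refine Prod.ext rfl (Equiv.ext fun i => ?_)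
    exact (s.orderEmbOfFin hs).injective (congrFun h i)
  · intro f hf
    refine hH f fun hinj => hf ?_
    have hcard : (univ.map ⟨f, hinj⟩).card = m := by simp
    have hmem (i : Fin m) : f i ∈ univ.map ⟨f, hinj⟩ := mem_map_of_mem ⟨f, hinj⟩ (mem_univ i)
    let τ : Fin m → Fin m := fun i => ((univ.map ⟨f, hinj⟩).orderIsoOfFin hcard).symm ⟨f i, hmem i⟩
    have hτ (i : Fin m) : (univ.map ⟨f, hinj⟩).orderEmbOfFin hcard (τ i) = f i := by
      rw [← coe_orderIsoOfFin_apply, OrderIso.apply_symm_apply]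
    have hτinj : Function.Injective τ := fun i j h => hinj (by rw [← hτ i, ← hτ j, h])
    exact ⟨(⟨_, hcard⟩, Equiv.ofBijective τ (Finite.injective_iff_bijective.1 hτinj)), funext hτ⟩

theorem localization_grassmannian_low_degree {F : Type*} [Field F] (m n : ℕ)
    (hm : 0 < m) (hmn : m < n)
    (t : Fin n → F) (ht : Function.Injective t)
    (W : MvPolynomial (Fin m) F) (hWsymm : W.IsSymmetric)
    (d : ℕ) (hWhom : W.IsHomogeneous d) (hd : d < m * (n - m)) :
    ∑ s : {s : Finset (Fin n) // s.card = m},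
      (MvPolynomial.eval (fun i => t ↑(s.1.orderIsoOfFin s.2 i)) W) /
        ∏ k ∈ s.1, ∏ l ∈ s.1ᶜ, (t l - t k) = 0 := by
  let G : MvPolynomial (Fin m) F :=
    W * (Matrix.vandermonde MvPolynomial.X).det * ∏ i : Fin m, MvPolynomial.X i ^ (i : ℕ)
  have hG : G.totalDegree < (Fintype.card (Fin n) - 1) * Fintype.card (Fin m) := by
    have hX : (∏ i : Fin m, (MvPolynomial.X i : MvPolynomial (Fin m) F) ^ (i : ℕ)).totalDegree ≤
        ∑ i : Fin m, (i : ℕ) :=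
      (MvPolynomial.totalDegree_finsetProd _ _).trans (sum_le_sum fun i _ => by simp)
    have hsum : ∑ i : Fin m, (m - 1 - i) + ∑ i : Fin m, (i : ℕ) = m * (m - 1) := by
      rw [← sum_add_distrib, sum_congr rfl fun (i : Fin m) _ =>
        (by lia : m - 1 - (i : ℕ) + i = m - 1)]
      simp
    have hV := MvPolynomial.totalDegree_det_vandermonde_X_le F m
    have hW := hWhom.totalDegree_le
    have h₁ := MvPolynomial.totalDegree_mul (W * (Matrix.vandermonde MvPolynomial.X).det)
      (∏ i : Fin m, MvPolynomial.X i ^ (i : ℕ))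
    have h₂ := MvPolynomial.totalDegree_mul W (Matrix.vandermonde MvPolynomial.X).det
    have htotal : m * (n - m) + m * (m - 1) = (n - 1) * m := by
      rw [← mul_add, mul_comm]
      congr 1
      lia
    simp only [Fintype.card_fin]
    lia
  let w : Fin n → F := fun k => (∏ l ∈ univ.erase k, (t l - t k))⁻¹
  have hzero : ∑ f : Fin m → Fin n, MvPolynomial.eval (t ∘ f) G * ∏ i, w (f i) = 0 :=
    sum_eval_mul_prod_inv_prod_sub_eq_zero ht hG
  rw [← sum_subset_sum_perm_eq_sum_fun] at hzero
  · rw [← mul_zero (∏ i : Fin m, ∏ _j ∈ Ioi i, (-1 : F)), ← hzero, mul_sum]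
    refine sum_congr rfl fun s _ => ?_
    let g := s.1.orderEmbOfFin s.2
    have hw (σ : Equiv.Perm (Fin m)) : ∏ i, w ((g ∘ σ) i) = ∏ i, w (g i) :=
      Equiv.prod_comp σ fun i => w (g i)
    have hdisc : ∏ i, ∏ j ∈ univ.erase i, (t (g j) - t (g i)) ≠ 0 :=
      prod_ne_zero_iff.2 fun i _ => prod_ne_zero_iff.2 fun j hj =>
        sub_ne_zero.2 fun h => ne_of_mem_erase hj (g.injective (ht h))
    have hperm := hWsymm.sum_perm_eval_mul_det_vandermonde (t ∘ g)
    have hprod : ∏ i, w (g i) = (∏ i, ∏ j ∈ univ.erase i, (t (g j) - t (g i)))⁻¹ *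
        (∏ k ∈ s.1, ∏ l ∈ s.1ᶜ, (t l - t k))⁻¹ := by
      rw [prod_inv_distrib, prod_orderEmbOfFin_prod_erase, mul_inv]
    calc _ = MvPolynomial.eval (t ∘ g) W * (∏ k ∈ s.1, ∏ l ∈ s.1ᶜ, (t l - t k))⁻¹ :=
          div_eq_mul_inv _ _
      _ = MvPolynomial.eval (t ∘ g) W * (∏ i, ∏ j ∈ univ.erase i, (t (g j) - t (g i))) *
          ∏ i, w (g i) := by
        rw [hprod]
        field_simp
      _ = (∏ i : Fin m, ∏ _j ∈ Ioi i, (-1 : F)) * ((MvPolynomial.eval (t ∘ g) W *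
          (Matrix.vandermonde (t ∘ g)).det ^ 2) * ∏ i, w (g i)) := by
        have := prod_prod_erase_sub_eq_det_vandermonde_sq (t ∘ g)
        simp only [Function.comp_apply] at this
        rw [this]
        ring
      _ = _ := by
        rw [← hperm, sum_mul]
        congr 1
        exact sum_congr rfl fun σ _ => by rw [hw σ, Function.comp_assoc]
  · intro f hf
    have hdet : MvPolynomial.eval (t ∘ f) (Matrix.vandermonde MvPolynomial.X).det = 0 := by
      have : (Matrix.vandermonde (t ∘ f)).det = 0 := by
        by_contra h
        exact hf (Matrix.det_vandermonde_ne_zero_iff.1 h).of_comp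
      rw [← this]
      simp [Matrix.det_vandermonde]
    simp [G, hdet]
end

section
/- Let $0 < m < n$, let $R = \mathbb{Q}[t_1,\dots,t_n]$ be the polynomial ring in $n$ variables, and let $K$ be its field of fractions. Let $W \in \mathbb{Q}[x_1,\dots,x_m]$ be a symmetric polynomial. For an $m$-element subset $\lambda \subseteq \{1,\dots,n\}$ write $W(t_\lambda)$ for the evaluation of $W$ at the family of variables $(t_i)_{i \in \lambda}$ (well defined by symmetry of $W$), and write $e_\lambda = \prod_{k \in \lambda,\; \ell \notin \lambda} (t_\ell - t_k)$. Then the element $\sum_{\lambda \subseteq \{1,\dots,n\},\ |\lambda| = m} \frac{W(t_\lambda)}{e_\lambda}$ of $K$ lies in the image of $R$ in $K$, i.e. it is a polynomial in $t_1,\dots,t_n$; moreover, if $W$ is homogeneous of degree $d \ge m(n-m)$, then this polynomial is homogeneous of degree $d - m(n-m)$. -/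
open MvPolynomial

/-- The localization expression
`∑_{λ ⊆ {1,…,n}, |λ| = m} W(t_λ) / ∏_{k ∈ λ, ℓ ∉ λ} (t_ℓ - t_k)`,
viewed as an element of the field of fractions of `ℚ[t_1,…,t_n]`. -/
noncomputable def grassLocSum (m n : ℕ) (W : MvPolynomial (Fin m) ℚ) :
    FractionRing (MvPolynomial (Fin n) ℚ) :=
  ∑ s : {s : Finset (Fin n) // s.card = m},
    algebraMap (MvPolynomial (Fin n) ℚ) (FractionRing (MvPolynomial (Fin n) ℚ))
        (MvPolynomial.aeval (fun i => (X ↑(s.1.orderIsoOfFin s.2 i) : MvPolynomial (Fin n) ℚ)) W) /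
      algebraMap (MvPolynomial (Fin n) ℚ) (FractionRing (MvPolynomial (Fin n) ℚ))
        (∏ k ∈ s.1, ∏ l ∈ s.1ᶜ, (X l - X k))

namespace MvPolynomial

variable {σ k : Type*} [Field k]

theorem irreducible_X_sub_X {i j : σ} (h : i ≠ j) :
    Irreducible (X i - X j : MvPolynomial σ k) := by
  have h1 : (X i - X j : MvPolynomial σ k).IsHomogeneous 1 :=
    (isHomogeneous_X k i).sub (isHomogeneous_X k j)
  have h0 : (X i - X j : MvPolynomial σ k) ≠ 0 := by
    rw [sub_ne_zero]
    exact (X_injective (R := k)).ne h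
  refine irreducible_of_totalDegree_eq_one (h1.totalDegree h0) fun x hx => ?_
  obtain ⟨d, hd⟩ := ne_zero_iff.mp h0
  refine isUnit_iff_ne_zero.mpr fun hx0 => hd ?_
  simpa [hx0] using hx d

theorem X_sub_X_dvd_X_sub_X {i j a b : σ} (hab : a ≠ b)
    (h : (X i - X j : MvPolynomial σ k) ∣ X a - X b) :
    (a = i ∧ b = j) ∨ (a = j ∧ b = i) := by
  classical
  have key (v : σ → k) (hv : v i = v j) : v a = v b := by
    have := map_dvd (eval v) h
    simpa [hv, sub_eq_zero] using this
  have ha : a = i ∨ a = j := by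
    by_contra! hc
    simpa [hab.symm] using key (Pi.single a 1) (by simp [hc.1.symm, hc.2.symm])
  have hb : b = i ∨ b = j := by
    by_contra! hc
    simpa [hab] using key (Pi.single b 1) (by simp [hc.1.symm, hc.2.symm])
  grind

theorem isRelPrime_X_sub_X {i j a b : σ} (hij : i ≠ j) (hab : a ≠ b)
    (h₁ : ¬(a = i ∧ b = j)) (h₂ : ¬(a = j ∧ b = i)) :
    IsRelPrime (X i - X j : MvPolynomial σ k) (X a - X b) :=
  (irreducible_X_sub_X hij).isRelPrime_iff_not_dvd.mpr fun h =>
    (X_sub_X_dvd_X_sub_X hab h).elim h₁ h₂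

theorem X_sub_X_dvd_sub_rename_swap [DecidableEq σ] (i j : σ) (p : MvPolynomial σ k) :
    (X i - X j) ∣ p - rename (Equiv.swap i j) p := by
  induction p using MvPolynomial.induction_on with
  | C a => simp
  | add p q hp hq =>
    rw [map_add, add_sub_add_comm]
    exact dvd_add hp hq
  | mul_X p l hp =>
    have hl : (X i - X j : MvPolynomial σ k) ∣ X l - X (Equiv.swap i j l) := by
      rcases eq_or_ne l i with rfl | hi
      · simp
      rcases eq_or_ne l j with rfl | hj
      · rw [Equiv.swap_apply_right, dvd_sub_comm]
      · simp [Equiv.swap_apply_of_ne_of_ne hi hj]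
    have : p * X l - rename (Equiv.swap i j) (p * X l) =
        (p - rename (Equiv.swap i j) p) * X l +
          rename (Equiv.swap i j) p * (X l - X (Equiv.swap i j l)) := by
      rw [map_mul, rename_X]
      ring
    rw [this]
    exact dvd_add (hp.mul_right _) (hl.mul_left _)

/-- A polynomial which changes sign under the transposition of `i` and `j` is divisible by
`X i - X j`. -/
theorem X_sub_X_dvd_of_rename_swap [DecidableEq σ] [NeZero (2 : k)] {i j : σ}
    {p : MvPolynomial σ k} (h : rename (Equiv.swap i j) p = -p) : (X i - X j) ∣ p := by
  have h2 := X_sub_X_dvd_sub_rename_swap i j p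
  have hp : p - rename (Equiv.swap i j) p = C 2 * p := by
    rw [h, map_ofNat]
    ring
  rw [hp] at h2
  exact ((isUnit_iff_ne_zero.mpr two_ne_zero).map C).dvd_mul_left.mp h2

theorem IsHomogeneous.of_mul_right {p q : MvPolynomial σ k} {a b : ℕ} (hq : q.IsHomogeneous b)
    (hq0 : q ≠ 0) (hpq : (p * q).IsHomogeneous (a + b)) : p.IsHomogeneous a := by
  let _ : GradedAlgebra (homogeneousSubmodule σ k) := gradedAlgebra
  have h := DirectSum.coe_decompose_mul_add_of_right_mem (homogeneousSubmodule σ k) (i := a)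
    (a := p) hq
  rw [DirectSum.decompose_of_mem_same _ hpq] at h
  rw [mul_right_cancel₀ hq0 h]
  exact (DirectSum.decompose (homogeneousSubmodule σ k) p a).2

theorem IsSymmetric.aeval_X_eq_of_range_eq {τ : Type*} {W : MvPolynomial τ k}
    (hW : W.IsSymmetric) {f g : τ → σ} (hf : f.Injective) (hg : g.Injective)
    (h : Set.range f = Set.range g) :
    aeval (fun i => (X (f i) : MvPolynomial σ k)) W = aeval (fun i => X (g i)) W := by
  let e : Equiv.Perm τ :=
    (Equiv.ofInjective f hf).trans ((Equiv.setCongr h).trans (Equiv.ofInjective g hg).symm)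
  have he (i : τ) : g (e i) = f i := by
    simp [e, Equiv.apply_ofInjective_symm hg]
  conv_rhs => rw [← hW e, aeval_rename]
  simp [Function.comp_def, he]

section Vandermonde

variable {n : ℕ}

/-- The Vandermonde determinant in the variables. -/
noncomputable def vandermondeX (n : ℕ) (k : Type*) [Field k] : MvPolynomial (Fin n) k :=
  (Matrix.vandermonde X).det

theorem vandermondeX_eq_prod :
    vandermondeX n k = ∏ i : Fin n, ∏ j ∈ Finset.Ioi i, (X j - X i) :=
  Matrix.det_vandermonde _

theorem vandermondeX_ne_zero : vandermondeX n k ≠ 0 :=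
  Matrix.det_vandermonde_ne_zero_iff.mpr X_injective

theorem rename_swap_vandermondeX {i j : Fin n} (h : i ≠ j) :
    rename (Equiv.swap i j) (vandermondeX n k) = -vandermondeX n k := by
  have := Matrix.det_permute (Equiv.swap i j)
    (Matrix.vandermonde (X : Fin n → MvPolynomial (Fin n) k))
  rw [Equiv.Perm.sign_swap h] at this
  rw [vandermondeX, AlgHom.map_det]
  convert this using 2
  · ext a b : 2
    simp [Matrix.vandermonde_apply]
  · simp

theorem X_sub_X_dvd_vandermondeX {i j : Fin n} (h : i ≠ j) :
    (X j - X i) ∣ vandermondeX n k := by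
  have dvd_of_lt {a b : Fin n} (hab : a < b) : (X b - X a) ∣ vandermondeX n k := by
    rw [vandermondeX_eq_prod, Finset.prod_sigma']
    exact Finset.dvd_prod_of_mem (fun x : (_ : Fin n) × Fin n => (X x.2 - X x.1 :
      MvPolynomial (Fin n) k)) (a := ⟨a, b⟩) (by simpa using hab)
  rcases lt_or_gt_of_ne h with hij | hij
  · exact dvd_of_lt hij
  · rw [← neg_sub, neg_dvd]
    exact dvd_of_lt hij

/-- The Vandermonde determinant divides every polynomial which changes sign under all
transpositions of variables. -/
theorem vandermondeX_dvd [NeZero (2 : k)] {p : MvPolynomial (Fin n) k}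
    (h : ∀ i j, i ≠ j → rename (Equiv.swap i j) p = -p) : vandermondeX n k ∣ p := by
  rw [vandermondeX_eq_prod, Finset.prod_sigma']
  refine Finset.prod_dvd_of_isRelPrime ?_ fun x hx => ?_
  · rintro ⟨i, j⟩ hx ⟨a, b⟩ hy hxy
    simp only [Finset.coe_sigma, Set.mem_sigma_iff, Finset.coe_Ioi, Set.mem_Ioi] at hx hy
    refine isRelPrime_X_sub_X hx.2.ne' hy.2.ne' ?_ ?_
    · rintro ⟨rfl, rfl⟩
      exact hxy rfl
    · rintro ⟨rfl, rfl⟩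
      exact lt_asymm hx.2 hy.2
  · have hx : x.1 < x.2 := by simpa using hx
    exact X_sub_X_dvd_of_rename_swap (h _ _ hx.ne')

/-- The Euler class `∏_{k ∈ s, ℓ ∉ s} (X ℓ - X k)` of the tangent space of the Grassmannian at the
fixed point indexed by `s`. -/
noncomputable def grassEuler (k : Type*) [Field k] (s : Finset (Fin n)) : MvPolynomial (Fin n) k :=
  ∏ a ∈ s, ∏ l ∈ sᶜ, (X l - X a)

theorem grassEuler_dvd_vandermondeX (s : Finset (Fin n)) :
    grassEuler k s ∣ vandermondeX n k := by
  rw [grassEuler, ← Finset.prod_product']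
  have hne {x : Fin n × Fin n} (hx : x ∈ s ×ˢ sᶜ) : x.1 ≠ x.2 := by
    rw [Finset.mem_product, Finset.mem_compl] at hx
    exact fun h => hx.2 (h ▸ hx.1)
  refine Finset.prod_dvd_of_isRelPrime ?_ fun x hx => X_sub_X_dvd_vandermondeX (hne hx)
  rintro ⟨i, j⟩ hx ⟨a, b⟩ hy hxy
  refine isRelPrime_X_sub_X (hne hx).symm (hne hy).symm ?_ ?_
  · rintro ⟨rfl, rfl⟩
    exact hxy rfl
  · rintro ⟨rfl, rfl⟩
    simp only [Finset.coe_product, Set.mem_prod, Finset.mem_coe, Finset.mem_compl] at hx hy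
    exact hy.2 hx.1

theorem grassEuler_ne_zero (s : Finset (Fin n)) : grassEuler k s ≠ 0 :=
  ne_zero_of_dvd_ne_zero vandermondeX_ne_zero (grassEuler_dvd_vandermondeX s)

theorem grassEuler_isHomogeneous (s : Finset (Fin n)) :
    (grassEuler k s).IsHomogeneous (s.card * (n - s.card)) := by
  have h : (grassEuler k s).IsHomogeneous (∑ _a ∈ s, ∑ _l ∈ sᶜ, 1) :=
    IsHomogeneous.prod _ _ _ fun a _ => IsHomogeneous.prod _ _ _ fun l _ =>
      (isHomogeneous_X k l).sub (isHomogeneous_X k a)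
  simpa [Finset.card_compl] using h

theorem rename_grassEuler (e : Equiv.Perm (Fin n)) (s : Finset (Fin n)) :
    rename e (grassEuler k s) = grassEuler k (s.map e.toEmbedding) := by
  have hc : (s.map e.toEmbedding)ᶜ = sᶜ.map e.toEmbedding := by
    ext x
    simp [Finset.mem_map_equiv]
  simp [grassEuler, hc, map_prod, Finset.prod_map]

end Vandermonde

end MvPolynomial

/-- The value of `W` at the variables indexed by `s`. -/
noncomputable def grassEval {m n : ℕ} (W : MvPolynomial (Fin m) ℚ)
    (s : {s : Finset (Fin n) // s.card = m}) : MvPolynomial (Fin n) ℚ :=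
  aeval (fun i => X ↑(s.1.orderIsoOfFin s.2 i)) W

theorem grassLocSum_eq (m n : ℕ) (W : MvPolynomial (Fin m) ℚ) :
    grassLocSum m n W = ∑ s : {s : Finset (Fin n) // s.card = m},
      algebraMap _ (FractionRing (MvPolynomial (Fin n) ℚ)) (grassEval W s) /
        algebraMap _ _ (grassEuler ℚ s.1) :=
  rfl

/-- The action of a permutation on the subsets of cardinality `m`. -/
def mapCard {m n : ℕ} (e : Equiv.Perm (Fin n)) :
    Equiv.Perm {s : Finset (Fin n) // s.card = m} :=
  e.finsetCongr.subtypeEquiv fun s => by simp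

theorem coe_mapCard {m n : ℕ} (e : Equiv.Perm (Fin n)) (s : {s : Finset (Fin n) // s.card = m}) :
    (mapCard e s).1 = s.1.map e.toEmbedding :=
  rfl

theorem rename_grassEval {m n : ℕ} {W : MvPolynomial (Fin m) ℚ} (hW : W.IsSymmetric)
    (e : Equiv.Perm (Fin n)) (s : {s : Finset (Fin n) // s.card = m}) :
    rename e (grassEval W s) = grassEval W (mapCard e s) := by
  have range_eq (t : {s : Finset (Fin n) // s.card = m}) :
      Set.range (fun i => (t.1.orderIsoOfFin t.2 i : Fin n)) = t.1 := by
    simp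
  have inj (t : {s : Finset (Fin n) // s.card = m}) :
      Function.Injective (fun i => (t.1.orderIsoOfFin t.2 i : Fin n)) :=
    Subtype.val_injective.comp (t.1.orderIsoOfFin t.2).injective
  have h : rename e (grassEval W s) =
      aeval (fun i => X (e (s.1.orderIsoOfFin s.2 i))) W := by
    rw [grassEval, comp_aeval_apply]
    simp
  rw [h]
  refine hW.aeval_X_eq_of_range_eq (e.injective.comp (inj s)) (inj _) ?_
  rw [range_eq, coe_mapCard, ← Function.comp_def, Set.range_comp, range_eq]
  simp

theorem exists_algebraMap_eq_grassLocSum {m n : ℕ} {W : MvPolynomial (Fin m) ℚ}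
    (hW : W.IsSymmetric) :
    ∃ p : MvPolynomial (Fin n) ℚ,
      algebraMap _ (FractionRing (MvPolynomial (Fin n) ℚ)) p = grassLocSum m n W := by
  choose c hc using fun s : Finset (Fin n) => grassEuler_dvd_vandermondeX (k := ℚ) s
  have hinj := IsFractionRing.injective (MvPolynomial (Fin n) ℚ)
    (FractionRing (MvPolynomial (Fin n) ℚ))
  have rename_c {i j : Fin n} (hij : i ≠ j) (s : Finset (Fin n)) :
      rename (Equiv.swap i j) (c s) = -c (s.map (Equiv.swap i j).toEmbedding) := by
    refine mul_left_cancel₀ (grassEuler_ne_zero (s.map (Equiv.swap i j).toEmbedding)) ?_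
    rw [← rename_grassEuler, ← map_mul, ← hc, mul_neg, rename_grassEuler, ← hc,
      rename_swap_vandermondeX hij]
  obtain ⟨p, hp⟩ : vandermondeX n ℚ ∣
      ∑ s : {s : Finset (Fin n) // s.card = m}, grassEval W s * c s.1 := by
    refine vandermondeX_dvd fun i j hij => ?_
    rw [map_sum, ← Equiv.sum_comp (mapCard (Equiv.swap i j)) fun s => grassEval W s * c s.1,
      ← Finset.sum_neg_distrib]
    refine Finset.sum_congr rfl fun s _ => ?_
    rw [map_mul, rename_grassEval hW, rename_c hij, coe_mapCard, mul_neg]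
  refine ⟨p, mul_left_cancel₀ ((map_ne_zero_iff _ hinj).mpr vandermondeX_ne_zero) ?_⟩
  rw [← map_mul, ← hp, map_sum, grassLocSum_eq, Finset.mul_sum]
  refine Finset.sum_congr rfl fun s _ => ?_
  have hs := (map_ne_zero_iff _ hinj).mpr (grassEuler_ne_zero (k := ℚ) s.1)
  rw [hc s.1, map_mul, map_mul]
  field_simp

theorem isHomogeneous_of_algebraMap_eq_grassLocSum {m n d : ℕ} {W : MvPolynomial (Fin m) ℚ}
    (hW : W.IsHomogeneous d) (hd : m * (n - m) ≤ d) {p : MvPolynomial (Fin n) ℚ}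
    (hp : algebraMap _ (FractionRing (MvPolynomial (Fin n) ℚ)) p = grassLocSum m n W) :
    p.IsHomogeneous (d - m * (n - m)) := by
  classical
  have hinj := IsFractionRing.injective (MvPolynomial (Fin n) ℚ)
    (FractionRing (MvPolynomial (Fin n) ℚ))
  have euler_hom (s : {s : Finset (Fin n) // s.card = m}) :
      (grassEuler ℚ s.1).IsHomogeneous (m * (n - m)) := by
    simpa [s.2] using grassEuler_isHomogeneous (k := ℚ) s.1
  have eval_hom (s : {s : Finset (Fin n) // s.card = m}) : (grassEval W s).IsHomogeneous d := by
    rw [← one_mul d]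
    exact hW.aeval _ fun i => isHomogeneous_X ℚ _
  have hprod : p * ∏ s : {s : Finset (Fin n) // s.card = m}, grassEuler ℚ s.1 =
      ∑ s : {s : Finset (Fin n) // s.card = m},
        grassEval W s * ∏ t ∈ Finset.univ.erase s, grassEuler ℚ t.1 := by
    apply hinj
    rw [map_mul, hp, grassLocSum_eq, map_sum, Finset.sum_mul]
    refine Finset.sum_congr rfl fun s hs => ?_
    have hs0 := (map_ne_zero_iff _ hinj).mpr (grassEuler_ne_zero (k := ℚ) s.1)
    rw [← Finset.mul_prod_erase _ _ hs, map_mul, map_mul]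
    field_simp
  refine IsHomogeneous.of_mul_right (IsHomogeneous.prod Finset.univ _ _ fun s _ => euler_hom s)
    (Finset.prod_ne_zero_iff.mpr fun s _ => grassEuler_ne_zero s.1) ?_
  rw [hprod]
  refine IsHomogeneous.sum _ _ _ fun s hs => ?_
  have h := (eval_hom s).mul (IsHomogeneous.prod (Finset.univ.erase s) _ _ fun t _ => euler_hom t)
  rwa [← Finset.add_sum_erase _ _ hs, ← add_assoc, Nat.sub_add_cancel hd]

theorem grassLocSum_is_polynomial (m n : ℕ) (hm : 0 < m) (hmn : m < n)
    (W : MvPolynomial (Fin m) ℚ) (hWsymm : W.IsSymmetric) :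
    (∃ p : MvPolynomial (Fin n) ℚ,
        algebraMap (MvPolynomial (Fin n) ℚ) (FractionRing (MvPolynomial (Fin n) ℚ)) p =
          grassLocSum m n W) ∧
      ∀ d : ℕ, W.IsHomogeneous d → m * (n - m) ≤ d →
        ∃ p : MvPolynomial (Fin n) ℚ, p.IsHomogeneous (d - m * (n - m)) ∧
          algebraMap (MvPolynomial (Fin n) ℚ) (FractionRing (MvPolynomial (Fin n) ℚ)) p =
            grassLocSum m n W := by
  obtain ⟨p, hp⟩ := exists_algebraMap_eq_grassLocSum (n := n) hWsymm
  exact ⟨⟨p, hp⟩, fun d hW hd =>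
    ⟨p, isHomogeneous_of_algebraMap_eq_grassLocSum hW hd hp, hp⟩⟩
end

section
/- Let $F$ be a field, let $0 < m < n$, and let $t_1, \dots, t_n$ be pairwise distinct elements of $F$. For an $m$-element subset $\lambda \subseteq \{1,\dots,n\}$ write $e_\lambda = \prod_{k \in \lambda,\; \ell \notin \lambda} (t_\ell - t_k)$. Then $\sum_{\lambda \subseteq \{1,\dots,n\},\ |\lambda| = m} \frac{\big(-\sum_{i \in \lambda} t_i\big)^{m(n-m)}}{e_\lambda} \;=\; \frac{(m(n-m))!}{\prod_{i=1}^{m} \prod_{j=1}^{n-m} (n - i - j + 1)}$, where the right-hand side is the natural number $\deg(\mathrm{Grass}_m(\mathbb{C}^n))$ given by the hook length formula for the $m \times (n-m)$ rectangle (the hook length at box $(i,j)$ being $(m-i) + (n-m-j) + 1 = n - i - j + 1$), regarded as an element of $F$. -/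
open Finset

theorem sum_nodalWeight_mul_pow {F : Type*} [Field F] {n : ℕ} {t : Fin n → F}
    (ht : Function.Injective t) {a : ℕ} (ha : a < n) :
    ∑ k, Lagrange.nodalWeight univ t k * t k ^ a = if a + 1 = n then 1 else 0 := by
  have h := Lagrange.coeff_eq_sum (s := univ) (v := t) ht.injOn (P := Polynomial.X ^ a)
    (by rw [Polynomial.degree_X_pow]; simpa using ha)
  rw [Polynomial.coeff_X_pow, card_univ, Fintype.card_fin] at h
  have hn : (a + 1 = n) ↔ (n - 1 = a) := by omega
  simp only [hn, h, Lagrange.nodalWeight, Polynomial.eval_pow, Polynomial.eval_X,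
    prod_inv_distrib, div_eq_inv_mul]

theorem sum_tuples_eq_sum_subsets {M ι : Type*} [AddCommMonoid M] [Fintype ι] [LinearOrder ι]
    {m : ℕ} (G : (Fin m → ι) → M) (hG : ∀ f, ¬ Function.Injective f → G f = 0) :
    ∑ f, G f = ∑ s : {s : Finset ι // s.card = m}, ∑ σ : Equiv.Perm (Fin m),
      G (s.1.orderEmbOfFin s.2 ∘ σ) := by
  rw [← Fintype.sum_prod_type']
  symm
  refine sum_of_injOn (fun p => p.1.1.orderEmbOfFin p.1.2 ∘ p.2) ?_ (by simp) ?_ (by simp)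
  · rintro ⟨⟨s, hs⟩, σ⟩ - ⟨⟨s', hs'⟩, σ'⟩ - h
    simp only at h
    have hr := congrArg Set.range h
    simp only [EquivLike.range_comp, range_orderEmbOfFin, coe_inj] at hr
    subst hr
    have : σ = σ' := Equiv.ext fun i => (s.orderEmbOfFin hs).injective (congrFun h i)
    rw [this]
  · intro f _ hf
    apply hG
    intro hinj
    apply hf
    have hs : (univ.image f).card = m := by simp [card_image_of_injective _ hinj]
    have hmem : ∀ i, f i ∈ univ.image f := fun i => mem_image_of_mem f (mem_univ i)
    let g : Fin m → Fin m := fun i => ((univ.image f).orderIsoOfFin hs).symm ⟨f i, hmem i⟩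
    have hg : Function.Injective g := fun i j hij => hinj (by simpa [g] using hij)
    refine ⟨(⟨univ.image f, hs⟩, Equiv.ofBijective g (Finite.injective_iff_bijective.mp hg)),
      by simp, ?_⟩
    ext i
    simp [g, ← coe_orderIsoOfFin_apply]

theorem det_vandermonde_sq {R : Type*} [CommRing R] {m : ℕ} (x : Fin m → R) :
    (Matrix.vandermonde x).det ^ 2 =
      (∏ i : Fin m, ∏ _j ∈ Ioi i, (-1)) * ∏ i, ∏ j ∈ {i}ᶜ, (x i - x j) := by
  rw [← prod_prod_Ioi_mul_eq_prod_prod_off_diag (fun j i => x i - x j), Matrix.det_vandermonde,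
    ← prod_pow, ← prod_mul_distrib]
  refine prod_congr rfl fun i _ => ?_
  rw [← prod_pow, ← prod_mul_distrib]
  exact prod_congr rfl fun j _ => by ring

theorem det_vandermonde_sq_mul_prod_nodalWeight {F ι : Type*} [Field F] [Fintype ι]
    [LinearOrder ι] {t : ι → F} (ht : Function.Injective t) {m : ℕ} (s : Finset ι)
    (hs : s.card = m) :
    (Matrix.vandermonde (t ∘ s.orderEmbOfFin hs)).det ^ 2 *
        ∏ i, Lagrange.nodalWeight univ t (s.orderEmbOfFin hs i) =
      (∏ i : Fin m, ∏ _j ∈ Ioi i, (-1)) * (∏ k ∈ s, ∏ l ∈ sᶜ, (t k - t l))⁻¹ := by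
  have himg : univ.map (s.orderEmbOfFin hs).toEmbedding = s := map_orderEmbOfFin_univ s hs
  have h1 : ∏ i, ∏ j ∈ {i}ᶜ, ((t ∘ s.orderEmbOfFin hs) i - (t ∘ s.orderEmbOfFin hs) j) =
      ∏ k ∈ s, ∏ l ∈ s.erase k, (t k - t l) := by
    conv_rhs => rw [← himg, prod_map]
    refine prod_congr rfl fun i _ => ?_
    rw [← map_erase, prod_map, compl_singleton]
    rfl
  have h2 : ∏ i, Lagrange.nodalWeight univ t (s.orderEmbOfFin hs i) =
      ∏ k ∈ s, ((∏ l ∈ s.erase k, (t k - t l))⁻¹ * (∏ l ∈ sᶜ, (t k - t l))⁻¹) := by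
    conv_rhs => rw [← prod_coe_sort]
    rw [← (s.orderIsoOfFin hs).toEquiv.prod_comp]
    refine prod_congr rfl fun i _ => ?_
    have hk : s.orderEmbOfFin hs i ∈ s := orderEmbOfFin_mem s hs i
    have hu : univ.erase (s.orderEmbOfFin hs i) = s.erase (s.orderEmbOfFin hs i) ∪ sᶜ := by
      ext l
      by_cases hl : l ∈ s
      · simp [hl]
      · simp only [mem_erase, mem_univ, and_true, mem_union, hl, mem_compl]
        simp only [and_false, not_false_eq_true, or_true, iff_true]
        rintro rfl
        exact hl hk
    rw [Lagrange.nodalWeight, hu, prod_union, prod_inv_distrib, prod_inv_distrib]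
    · rfl
    · exact disjoint_left.mpr fun l hl hl' => (mem_compl.mp hl') (mem_of_mem_erase hl)
  have h3 : ∏ k ∈ s, ∏ l ∈ s.erase k, (t k - t l) ≠ 0 :=
    prod_ne_zero_iff.mpr fun k _ => prod_ne_zero_iff.mpr fun l hl =>
      sub_ne_zero.mpr fun h => (ne_of_mem_erase hl) (ht h).symm
  rw [det_vandermonde_sq, h1, h2, prod_mul_distrib, prod_inv_distrib, prod_inv_distrib]
  field_simp

/-- The coefficient of `∏ i, x i ^ (n - 1 - i)` in `(∑ i, x i) ^ (m * (n - m))` times the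
Vandermonde determinant of `x 0, …, x (m - 1)`. -/
def signedMultinomialSum (m n : ℕ) : ℤ :=
  ∑ σ : Equiv.Perm (Fin m), (Equiv.Perm.sign σ : ℤ) *
    ∑ k ∈ piAntidiag univ (m * (n - m)),
      if ∀ i, k i + σ i + i + 1 = n then (Nat.multinomial univ k : ℤ) else 0

theorem sum_perm_add_sum_id {m n : ℕ} (hmn : m < n) (σ : Equiv.Perm (Fin m)) :
    m * (n - m) + ∑ i : Fin m, ((σ i : ℕ) + i + 1) = m * n := by
  have hσ : ∑ i, (σ i : ℕ) = ∑ i : Fin m, (i : ℕ) := Equiv.sum_comp σ fun i : Fin m => (i : ℕ)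
  have hg : (∑ i : Fin m, (i : ℕ)) * 2 = m * (m - 1) := by
    rw [Fin.sum_univ_eq_sum_range (fun i => i), sum_range_id_mul_two]
  simp only [sum_add_distrib, hσ, sum_const, card_univ, Fintype.card_fin, smul_eq_mul, mul_one]
  obtain ⟨d, rfl⟩ := Nat.exists_eq_add_of_lt hmn
  obtain _ | m := m
  · simp
  · simp only [Nat.add_sub_cancel] at hg
    rw [show m + 1 + d + 1 - (m + 1) = d + 1 by omega]
    linarith

theorem prod_nodalWeight_moments {F : Type*} [Field F] {m n : ℕ} (hmn : m < n) {t : Fin n → F}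
    (ht : Function.Injective t) (σ : Equiv.Perm (Fin m)) {k : Fin m → ℕ}
    (hk : k ∈ piAntidiag univ (m * (n - m))) :
    ∏ i, ∑ a, Lagrange.nodalWeight univ t a * t a ^ (k i + σ i + i) =
      if ∀ i, k i + σ i + i + 1 = n then 1 else 0 := by
  have hsum : ∑ i, (k i + (σ i : ℕ) + i + 1) = ∑ _i : Fin m, n := by
    have h := sum_perm_add_sum_id hmn σ
    simp only [← (mem_piAntidiag.mp hk).1, ← sum_add_distrib] at h
    simpa [add_assoc] using h
  split_ifs with h
  · refine prod_eq_one fun i _ => ?_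
    rw [sum_nodalWeight_mul_pow ht (by have := h i; omega), if_pos (h i)]
  · have : ∃ i, k i + σ i + i + 1 < n := by
      by_contra! hcon
      exact h fun i => ((sum_eq_sum_iff_of_le fun i _ => hcon i).mp hsum.symm i (mem_univ i)).symm
    obtain ⟨i, hi⟩ := this
    refine prod_eq_zero (mem_univ i) ?_
    rw [sum_nodalWeight_mul_pow ht (by omega), if_neg hi.ne]

theorem sum_tuples_eq_signedMultinomialSum {F : Type*} [Field F] {m n : ℕ} (hmn : m < n)
    {t : Fin n → F} (ht : Function.Injective t) :
    ∑ f : Fin m → Fin n, (∏ i, Lagrange.nodalWeight univ t (f i)) *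
      (∑ i, t (f i)) ^ (m * (n - m)) * (Matrix.vandermonde (t ∘ f)).det *
        ∏ i, t (f i) ^ (i : ℕ) = signedMultinomialSum m n := by
  have hdet (f : Fin m → Fin n) : (Matrix.vandermonde (t ∘ f)).det =
      ∑ σ : Equiv.Perm (Fin m), ((Equiv.Perm.sign σ : ℤ) : F) * ∏ i, t (f i) ^ (σ i : ℕ) := by
    rw [← Matrix.det_transpose, Matrix.det_apply']
    simp [Matrix.vandermonde_apply]
  simp only [hdet, sum_pow_eq_sum_piAntidiag, mul_sum, sum_mul, signedMultinomialSum, Int.cast_sum]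
  rw [sum_comm]
  refine sum_congr rfl fun σ _ => ?_
  rw [sum_comm]
  refine sum_congr rfl fun k hk => ?_
  have h := prod_nodalWeight_moments hmn ht σ hk
  rw [Fintype.prod_sum] at h
  calc _ = ((Equiv.Perm.sign σ : ℤ) : F) * (Nat.multinomial univ k : F) *
        ∑ f : Fin m → Fin n, ∏ i, Lagrange.nodalWeight univ t (f i) *
          t (f i) ^ (k i + σ i + i) := by
        rw [mul_sum]
        refine sum_congr rfl fun f _ => ?_
        simp only [pow_add, prod_mul_distrib]
        ring
    _ = _ := by
        rw [h]
        split_ifs <;> simp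

theorem sum_tuples_eq_localization_sum {F : Type*} [Field F] {m n : ℕ}
    {t : Fin n → F} (ht : Function.Injective t) (N : ℕ) :
    ∑ f : Fin m → Fin n, (∏ i, Lagrange.nodalWeight univ t (f i)) *
      (∑ i, t (f i)) ^ N * (Matrix.vandermonde (t ∘ f)).det * ∏ i, t (f i) ^ (i : ℕ) =
    (∏ i : Fin m, ∏ _j ∈ Ioi i, (-1)) * ∑ s : {s : Finset (Fin n) // s.card = m},
      (∑ i ∈ s.1, t i) ^ N / ∏ k ∈ s.1, ∏ l ∈ s.1ᶜ, (t k - t l) := by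
  rw [sum_tuples_eq_sum_subsets, mul_sum]
  · refine sum_congr rfl fun ⟨s, hs⟩ _ => ?_
    set e := s.orderEmbOfFin hs
    have hsum : ∑ i ∈ s, t i = ∑ i, t (e i) := by
      conv_lhs => rw [← map_orderEmbOfFin_univ s hs, sum_map]
      rfl
    have hterm (σ : Equiv.Perm (Fin m)) :
        (∏ i, Lagrange.nodalWeight univ t ((e ∘ σ) i)) * (∑ i, t ((e ∘ σ) i)) ^ N *
          (Matrix.vandermonde (t ∘ e ∘ σ)).det * ∏ i, t ((e ∘ σ) i) ^ (i : ℕ) =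
        (∏ i, Lagrange.nodalWeight univ t (e i)) * (∑ i, t (e i)) ^ N *
          (Matrix.vandermonde (t ∘ e)).det *
            (((Equiv.Perm.sign σ : ℤ) : F) * ∏ i, t (e (σ i)) ^ (i : ℕ)) := by
      have h1 := Equiv.prod_comp σ fun i => Lagrange.nodalWeight univ t (e i)
      have h2 := Equiv.sum_comp σ fun i => t (e i)
      have h3 : (Matrix.vandermonde (t ∘ e ∘ σ)).det =
          ((Equiv.Perm.sign σ : ℤ) : F) * (Matrix.vandermonde (t ∘ e)).det :=
        Matrix.det_permute σ (Matrix.vandermonde (t ∘ e))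
      simp only [Function.comp_apply, h1, h2, h3]
      ring
    have hdet : (Matrix.vandermonde (t ∘ e)).det =
        ∑ σ : Equiv.Perm (Fin m), ((Equiv.Perm.sign σ : ℤ) : F) *
          ∏ i, t (e (σ i)) ^ (i : ℕ) := by
      rw [Matrix.det_apply']
      simp [Matrix.vandermonde_apply]
    have h := det_vandermonde_sq_mul_prod_nodalWeight ht s hs
    rw [sum_congr rfl fun σ _ => hterm σ, ← mul_sum, ← hdet, hsum, div_eq_mul_inv]
    linear_combination (∑ i, t (e i)) ^ N * h
  · intro f hf
    have : (Matrix.vandermonde (t ∘ f)).det = 0 := by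
      by_contra h
      exact hf (Matrix.det_vandermonde_ne_zero_iff.mp h).of_comp
    simp [this]

theorem sum_multinomial_eq {m n : ℕ} (hmn : m < n) (σ : Equiv.Perm (Fin m)) :
    (∑ k ∈ piAntidiag univ (m * (n - m)),
      if ∀ i, k i + σ i + i + 1 = n then (Nat.multinomial univ k : ℚ) else 0) =
    (m * (n - m)).factorial *
      ∏ i : Fin m, (((n - 1 - i).descFactorial (σ i) : ℚ) / (n - 1 - i).factorial) := by
  by_cases h : ∀ i, (σ i : ℕ) + i + 1 ≤ n
  · have hk : ∑ i : Fin m, (n - 1 - i - σ i) = m * (n - m) := by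
      have h1 : ∑ i : Fin m, (n - 1 - i - σ i) + ∑ i : Fin m, ((σ i : ℕ) + i + 1) = m * n := by
        rw [← sum_add_distrib]
        calc _ = ∑ _i : Fin m, n := sum_congr rfl fun i _ => by have := h i; omega
          _ = _ := by simp
      have h2 := sum_perm_add_sum_id hmn σ
      omega
    rw [sum_eq_single fun i : Fin m => n - 1 - i - σ i, if_pos fun i => by have := h i; dsimp only; omega]
    · have hspec := Nat.multinomial_spec univ fun i : Fin m => n - 1 - i - σ i
      rw [hk] at hspec
      rw [← hspec, Nat.cast_mul, mul_right_comm, Nat.cast_prod, ← prod_mul_distrib, prod_eq_one,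
        one_mul]
      intro i _
      have hd := Nat.factorial_mul_descFactorial (n := n - 1 - i) (k := σ i)
        (by have := h i; omega)
      rw [← mul_div_assoc, ← Nat.cast_mul, hd, div_self]
      exact_mod_cast Nat.factorial_ne_zero _
    · intro k _ hne
      rw [if_neg]
      intro hcon
      exact hne (funext fun i => by have := hcon i; omega)
    · intro hnot
      exact absurd (mem_piAntidiag.mpr ⟨hk, by simp⟩) hnot
  · push Not at h
    obtain ⟨i, hi⟩ := h
    rw [prod_eq_zero (mem_univ i), mul_zero]
    · refine sum_eq_zero fun k _ => if_neg fun hcon => ?_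
      have := hcon i
      omega
    · rw [Nat.descFactorial_eq_zero_iff_lt.mpr (by omega), Nat.cast_zero, zero_div]

theorem prod_Ioi_sub_eq_prod_factorial (m : ℕ) :
    ∏ i : Fin m, ∏ j ∈ Ioi i, ((j : ℚ) - i) = ∏ i : Fin m, ((i : ℕ).factorial : ℚ) := by
  obtain _ | m := m
  · simp
  · rw [← Matrix.det_vandermonde fun i : Fin (m + 1) => (i : ℚ),
      Matrix.det_vandermonde_id_eq_superFactorial, ← Nat.prod_range_succ_factorial,
      Fin.prod_univ_eq_prod_range (fun i => (i.factorial : ℚ)), Nat.cast_prod]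

theorem det_descFactorial {m n : ℕ} (hmn : m < n) :
    (Matrix.of fun i j : Fin m => ((n - 1 - i).descFactorial j : ℚ)).det =
      (∏ i : Fin m, ∏ _j ∈ Ioi i, (-1)) * ∏ i : Fin m, ((i : ℕ).factorial : ℚ) := by
  have h := Matrix.det_eval_matrixOfPolynomials_eq_det_vandermonde
    (fun i : Fin m => ((n - 1 - i : ℕ) : ℚ)) (fun j => descPochhammer ℚ j)
    (fun j => descPochhammer_natDegree ℚ j) (fun j => monic_descPochhammer ℚ j)
  simp only [descPochhammer_eval_eq_descFactorial] at h
  rw [← h, Matrix.det_vandermonde, ← prod_Ioi_sub_eq_prod_factorial, ← prod_mul_distrib]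
  refine prod_congr rfl fun i _ => ?_
  rw [← prod_mul_distrib]
  refine prod_congr rfl fun j _ => ?_
  rw [Nat.cast_sub (show (j : ℕ) ≤ n - 1 by omega), Nat.cast_sub (show (i : ℕ) ≤ n - 1 by omega)]
  ring

theorem prod_hook_row {m n : ℕ} (hmn : m < n) {i : ℕ} (hi : i < m) :
    (m - 1 - i).factorial * ∏ j ∈ range (n - m), (n - i - j - 1) = (n - 1 - i).factorial := by
  have h := Nat.factorial_mul_descFactorial (n := n - 1 - i) (k := n - m) (by omega)
  rw [show n - 1 - i - (n - m) = m - 1 - i by omega, Nat.descFactorial_eq_prod_range] at h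
  rw [← h]
  congr 1
  exact prod_congr rfl fun j _ => by omega

theorem prod_factorial_mul_prod_hook {m n : ℕ} (hmn : m < n) :
    (∏ i : Fin m, (i : ℕ).factorial) *
      ∏ i ∈ range m, ∏ j ∈ range (n - m), (n - i - j - 1) =
        ∏ i : Fin m, (n - 1 - i).factorial := by
  rw [Fin.prod_univ_eq_prod_range (fun i => i.factorial),
    Fin.prod_univ_eq_prod_range (fun i => (n - 1 - i).factorial),
    ← prod_range_reflect, ← prod_mul_distrib]
  exact prod_congr rfl fun i hi => prod_hook_row hmn (mem_range.mp hi)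

theorem prod_Ioi_neg_one_mul_self (R : Type*) [CommRing R] (m : ℕ) :
    (∏ i : Fin m, ∏ _j ∈ Ioi i, (-1 : R)) * ∏ i : Fin m, ∏ _j ∈ Ioi i, (-1 : R) = 1 := by
  simp only [← prod_mul_distrib, neg_mul_neg, mul_one, prod_const_one]

theorem signedMultinomialSum_mul_prod_hook {m n : ℕ} (hmn : m < n) :
    signedMultinomialSum m n * (∏ i ∈ range m, ∏ j ∈ range (n - m), (n - i - j - 1) : ℕ) =
      (∏ i : Fin m, ∏ _j ∈ Ioi i, (-1)) * ((m * (n - m)).factorial : ℤ) := by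
  have hD : (signedMultinomialSum m n : ℚ) = (m * (n - m)).factorial *
      ((∏ i : Fin m, ((n - 1 - i).factorial : ℚ))⁻¹ *
        (Matrix.of fun i j : Fin m => ((n - 1 - i).descFactorial j : ℚ)).det) := by
    rw [← Matrix.det_transpose, Matrix.det_apply', signedMultinomialSum, mul_sum, mul_sum]
    push_cast
    refine sum_congr rfl fun σ _ => ?_
    rw [sum_multinomial_eq hmn, prod_div_distrib]
    simp only [Matrix.transpose_apply, Matrix.of_apply]
    ring
  have hH := congrArg (Nat.cast : ℕ → ℚ) (prod_factorial_mul_prod_hook hmn)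
  rw [Nat.cast_mul, Nat.cast_prod (s := univ), Nat.cast_prod (s := univ)] at hH
  have h0 : ∏ i : Fin m, ((n - 1 - i).factorial : ℚ) ≠ 0 :=
    prod_ne_zero_iff.mpr fun i _ => by exact_mod_cast Nat.factorial_ne_zero _
  have key : (signedMultinomialSum m n : ℚ) *
      (∏ i ∈ range m, ∏ j ∈ range (n - m), (n - i - j - 1) : ℕ) =
      (∏ i : Fin m, ∏ _j ∈ Ioi i, (-1)) * ((m * (n - m)).factorial : ℚ) := by
    rw [hD, det_descFactorial hmn]
    calc _ = (∏ i : Fin m, ∏ _j ∈ Ioi i, (-1)) * ((m * (n - m)).factorial : ℚ) *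
          ((∏ i : Fin m, ((n - 1 - i).factorial : ℚ))⁻¹ *
            ∏ i : Fin m, ((n - 1 - i).factorial : ℚ)) := by rw [← hH]; ring
      _ = _ := by rw [inv_mul_cancel₀ h0, mul_one]
  have hcast : ((∏ i : Fin m, ∏ _j ∈ Ioi i, (-1) : ℤ) : ℚ) =
    ∏ i : Fin m, ∏ _j ∈ Ioi i, (-1) := by push_cast; rfl
  rw [← hcast] at key
  exact_mod_cast key

theorem signedMultinomialSum_eq {m n : ℕ} (hmn : m < n) :
    signedMultinomialSum m n = (∏ i : Fin m, ∏ _j ∈ Ioi i, (-1)) *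
      (((m * (n - m)).factorial /
        ∏ i ∈ range m, ∏ j ∈ range (n - m), (n - i - j - 1) : ℕ) : ℤ) := by
  have h := signedMultinomialSum_mul_prod_hook hmn
  have hε := prod_Ioi_neg_one_mul_self ℤ m
  have hpos : (∏ i ∈ range m, ∏ j ∈ range (n - m), (n - i - j - 1)) ≠ 0 :=
    prod_ne_zero_iff.mpr fun i hi => prod_ne_zero_iff.mpr fun j hj => by
      rw [mem_range] at hi hj
      omega
  generalize (∏ i ∈ range m, ∏ j ∈ range (n - m), (n - i - j - 1)) = H at *
  rw [Int.natCast_div, Int.ediv_eq_of_eq_mul_left (c := (∏ i : Fin m, ∏ _j ∈ Ioi i, (-1)) *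
    signedMultinomialSum m n) (by exact_mod_cast hpos), ← mul_assoc, hε, one_mul]
  linear_combination -((m * (n - m)).factorial : ℤ) * hε -
    (∏ i : Fin m, ∏ _j ∈ Ioi i, (-1)) * h

theorem degree_grassmannian_hook_formula {F : Type*} [Field F] (m n : ℕ)
    (hm : 0 < m) (hmn : m < n)
    (t : Fin n → F) (ht : Function.Injective t) :
    ∑ s : {s : Finset (Fin n) // s.card = m},
      (-(∑ i ∈ s.1, t i)) ^ (m * (n - m)) / ∏ k ∈ s.1, ∏ l ∈ s.1ᶜ, (t l - t k) =
      (((m * (n - m)).factorial /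
          ∏ i ∈ Finset.range m, ∏ j ∈ Finset.range (n - m), (n - i - j - 1) : ℕ) : F) := by
  have hterm (s : {s : Finset (Fin n) // s.card = m}) :
      (-(∑ i ∈ s.1, t i)) ^ (m * (n - m)) / ∏ k ∈ s.1, ∏ l ∈ s.1ᶜ, (t l - t k) =
        (∑ i ∈ s.1, t i) ^ (m * (n - m)) / ∏ k ∈ s.1, ∏ l ∈ s.1ᶜ, (t k - t l) := by
    have hneg : ∏ k ∈ s.1, ∏ l ∈ s.1ᶜ, (t l - t k) =
        (-1) ^ (m * (n - m)) * ∏ k ∈ s.1, ∏ l ∈ s.1ᶜ, (t k - t l) := by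
      have hc : (s.1ᶜ).card = n - m := by rw [card_compl, s.2, Fintype.card_fin]
      have hsign : ∏ _k ∈ s.1, ∏ _l ∈ s.1ᶜ, (-1 : F) = (-1) ^ (m * (n - m)) := by
        rw [prod_const, prod_const, hc, s.2, ← pow_mul, mul_comm]
      simp only [← hsign, ← prod_mul_distrib, neg_one_mul, neg_sub]
    rw [hneg, neg_pow, mul_div_mul_left _ _ (pow_ne_zero _ (neg_ne_zero.mpr one_ne_zero))]
  rw [sum_congr rfl fun s _ => hterm s]
  have h := (sum_tuples_eq_localization_sum ht (m * (n - m))).symm.trans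
    (sum_tuples_eq_signedMultinomialSum hmn ht)
  have hε := prod_Ioi_neg_one_mul_self F m
  rw [signedMultinomialSum_eq hmn, Int.cast_mul, Int.cast_natCast] at h
  simp only [Int.cast_prod, Int.cast_neg, Int.cast_one] at h
  exact mul_left_cancel₀ (left_ne_zero_of_mul_eq_one hε) h
end

section
/- Let $F$ be a field, let $0 < m < n$, and let $t_1, \dots, t_n$ be pairwise distinct elements of $F$. For a partition $P = (p_1 \ge p_2 \ge \dots \ge p_r \ge 0)$ with $r$ parts and pairwise distinct elements $x_1,\dots,x_r$ of $F$, define the Schur function by the Jacobi–Trudy bialternant formula $S_P(x_1,\dots,x_r) = \det\big(x_a^{\,r-b+p_b}\big)_{1 \le a,b \le r} \,\big/\, \prod_{1 \le a < b \le r}(x_a - x_b)$ (this value is symmetric in $x_1,\dots,x_r$). Let $J = (j_1 \ge j_2 \ge \dots \ge j_{n-m} \ge 0)$ and $K = (k_1 \ge k_2 \ge \dots \ge k_m \ge 0)$ be partitions with $j_{n-m} - m \ge k_1$, and let $I = (j_1 - m \ge j_2 - m \ge \dots \ge j_{n-m} - m \ge k_1 \ge \dots \ge k_m)$ be the concatenated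 partition with $n$ parts. For an $m$-element subset $\lambda \subseteq \{1,\dots,n\}$ write $e_\lambda = \prod_{k \in \lambda,\; \ell \notin \lambda} (t_\ell - t_k)$, write $S_K(t_\lambda)$ for the Schur function $S_K$ evaluated at the family $(t_i)_{i \in \lambda}$, and $S_J(t_{\lambda^c})$ for $S_J$ evaluated at the family $(t_\ell)_{\ell \notin \lambda}$. Then $\sum_{\lambda \subseteq \{1,\dots,n\},\ |\lambda| = m} \frac{S_J(t_{\lambda^c})\, S_K(t_\lambda)}{e_\lambda} \;=\; S_I(t_1,\dots,t_n)$. -/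
/-- The Schur function attached to a partition `p = (p 0 ≥ p 1 ≥ … ≥ p (r-1))`, evaluated at
`x 0, …, x (r-1)`, defined by the Jacobi–Trudy bialternant formula
`S_p(x) = det (x_a ^ (r - b + p_b))_{1 ≤ a,b ≤ r} / ∏_{a < b} (x_a - x_b)`
(indices `a, b` one-based in the displayed formula). -/
noncomputable def schurFn {F : Type*} [Field F] {r : ℕ} (p : Fin r → ℕ) (x : Fin r → F) : F :=
  (Matrix.of fun a b : Fin r => x a ^ (r - 1 - (b : ℕ) + p b)).det /
    ∏ a : Fin r, ∏ b ∈ Finset.univ.filter (fun b => a < b), (x a - x b)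

section

open Equiv Matrix

/-- Laplace expansion of a determinant along a block of columns: `ρ` is a family of
representatives of the left cosets of `Perm α × Perm β` in `Perm (α ⊕ β)`. -/
theorem Matrix.det_eq_sum_blocks {R α β S : Type*} [CommRing R] [Fintype α] [DecidableEq α]
    [Fintype β] [DecidableEq β] [Fintype S] (ρ : S → Perm (α ⊕ β))
    (hρ : ∀ σ, ∃! s, (ρ s)⁻¹ * σ ∈ (Perm.sumCongrHom α β).range)
    (M : Matrix (α ⊕ β) (α ⊕ β) R) :
    M.det = ∑ s, ((Perm.sign (ρ s) : ℤ) : R) *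
      ((M.submatrix (ρ s ∘ Sum.inl) Sum.inl).det *
        (M.submatrix (ρ s ∘ Sum.inr) Sum.inr).det) := by
  have hbij : Function.Bijective fun x : S × Perm α × Perm β =>
      ρ x.1 * Perm.sumCongrHom α β x.2 := by
    constructor
    · rintro ⟨s, τ⟩ ⟨s', τ'⟩ h
      have hs : s = s' := (hρ (ρ s * Perm.sumCongrHom α β τ)).unique
        (by simp) (by rw [show ρ s * _ = ρ s' * _ from h]; simp)
      subst hs
      exact Prod.ext rfl (Perm.sumCongrHom_injective (mul_left_cancel h))
    · intro σ
      obtain ⟨s, ⟨τ, hτ⟩, -⟩ := hρ σ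
      exact ⟨(s, τ), by simp [hτ]⟩
  rw [det_apply', ← hbij.sum_comp, Fintype.sum_prod_type]
  refine Finset.sum_congr rfl fun s _ => ?_
  rw [det_apply', det_apply', Finset.sum_mul_sum, Finset.mul_sum, Fintype.sum_prod_type]
  refine Finset.sum_congr rfl fun τ _ => ?_
  rw [Finset.mul_sum]
  refine Finset.sum_congr rfl fun τ' _ => ?_
  simp only [Perm.sumCongrHom_apply, Perm.sign_mul, Perm.sign_sumCongr, Fintype.prod_sum_type,
    Perm.mul_apply, Perm.sumCongr_apply, Sum.map_inl, Sum.map_inr, submatrix_apply,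
    Function.comp_apply, Units.val_mul, Int.cast_mul]
  ring

/-- The product `∏_{a < b} (x_a - x_b)` of the differences of a finite family. -/
def diffProd {R : Type*} [CommRing R] {r : ℕ} (x : Fin r → R) : R :=
  ∏ a : Fin r, ∏ b ∈ Finset.univ.filter (fun b => a < b), (x a - x b)

theorem diffProd_eq_det_vandermonde {R : Type*} [CommRing R] {r : ℕ} (x : Fin r → R) :
    diffProd x = (vandermonde fun i => -x i).det := by
  rw [det_vandermonde]
  refine Finset.prod_congr rfl fun a _ => Finset.prod_congr ?_ fun b _ => by ring
  ext b
  simp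

theorem diffProd_comp_perm {R : Type*} [CommRing R] {r : ℕ} (x : Fin r → R)
    (π : Perm (Fin r)) : diffProd (x ∘ π) = ((Perm.sign π : ℤ) : R) * diffProd x := by
  rw [diffProd_eq_det_vandermonde, diffProd_eq_det_vandermonde, ← det_permute]
  rfl

theorem diffProd_add {R : Type*} [CommRing R] {p q : ℕ} (x : Fin (p + q) → R) :
    diffProd x = diffProd (x ∘ Fin.castAdd q) * diffProd (x ∘ Fin.natAdd p) *
      ∏ a, ∏ b, (x (Fin.castAdd q a) - x (Fin.natAdd p b)) := by
  have hlt (a : Fin p) (b : Fin q) : Fin.castAdd q a < Fin.natAdd p b := by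
    simp only [Fin.lt_def, Fin.val_castAdd, Fin.val_natAdd]; omega
  simp only [diffProd, Finset.prod_filter, Fin.prod_univ_add, hlt, (hlt _ _).not_gt,
    Function.comp_apply, if_true, if_false, Finset.prod_mul_distrib, Finset.prod_const_one,
    (Fin.strictMono_castAdd q).lt_iff_lt, (Fin.strictMono_natAdd p).lt_iff_lt]
  ring

/-- The first `p` elements of `Fin n` followed by the last `q`. -/
def finBlockEquiv {p q n : ℕ} (h : p + q = n) : Fin p ⊕ Fin q ≃ Fin n :=
  finSumFinEquiv.trans (finCongr h)

theorem finBlockEquiv_inl_val {p q n : ℕ} (h : p + q = n) (i : Fin p) :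
    (finBlockEquiv h (Sum.inl i) : ℕ) = i := by
  simp [finBlockEquiv]

theorem finBlockEquiv_inr_val {p q n : ℕ} (h : p + q = n) (i : Fin q) :
    (finBlockEquiv h (Sum.inr i) : ℕ) = p + i := by
  simp [finBlockEquiv]

theorem diffProd_finBlockEquiv {R : Type*} [CommRing R] {p q n : ℕ} (h : p + q = n)
    (x : Fin n → R) :
    diffProd x = diffProd (fun a => x (finBlockEquiv h (Sum.inl a))) *
      diffProd (fun b => x (finBlockEquiv h (Sum.inr b))) *
      ∏ a, ∏ b, (x (finBlockEquiv h (Sum.inl a)) - x (finBlockEquiv h (Sum.inr b))) := by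
  subst h
  exact diffProd_add x

/-- The effect on `diffProd` of listing the family in the order given by `e`. -/
theorem sign_mul_diffProd {R : Type*} [CommRing R] {p q n : ℕ} (h : p + q = n)
    (e : Fin p ⊕ Fin q ≃ Fin n) (x : Fin n → R) :
    ((Perm.sign (e.trans (finBlockEquiv h).symm) : ℤ) : R) * diffProd x =
      diffProd (fun a => x (e (Sum.inl a))) * diffProd (fun b => x (e (Sum.inr b))) *
        ∏ a, ∏ b, (x (e (Sum.inl a)) - x (e (Sum.inr b))) := by
  have hsign : Perm.sign (e.trans (finBlockEquiv h).symm) =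
      Perm.sign ((finBlockEquiv h).symm.trans e) := by
    rw [← Perm.sign_symm_trans_trans (e.trans (finBlockEquiv h).symm) (finBlockEquiv h)]
    congr 1
    ext i
    simp
  rw [hsign, ← diffProd_comp_perm, diffProd_finBlockEquiv h]
  simp

/-- The elements of `sᶜ` in increasing order followed by those of `s`. -/
def complSumEquiv {p q n : ℕ} (s : Finset (Fin n)) (hq : s.card = q) (hp : sᶜ.card = p) :
    Fin p ⊕ Fin q ≃ Fin n :=
  (Equiv.sumComm _ _).trans (finSumEquivOfFinset hq hp)

theorem complSumEquiv_inl {p q n : ℕ} (s : Finset (Fin n)) (hq : s.card = q)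
    (hp : sᶜ.card = p) (i : Fin p) :
    complSumEquiv s hq hp (Sum.inl i) = (sᶜ.orderIsoOfFin hp i : Fin n) := rfl

theorem complSumEquiv_inr {p q n : ℕ} (s : Finset (Fin n)) (hq : s.card = q)
    (hp : sᶜ.card = p) (i : Fin q) :
    complSumEquiv s hq hp (Sum.inr i) = (s.orderIsoOfFin hq i : Fin n) := rfl

theorem exists_complSumEquiv_inl_iff {p q n : ℕ} (s : Finset (Fin n)) (hq : s.card = q)
    (hp : sᶜ.card = p) (x : Fin n) :
    (∃ a, complSumEquiv s hq hp (Sum.inl a) = x) ↔ x ∉ s := by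
  rw [← Finset.mem_compl]
  constructor
  · rintro ⟨a, rfl⟩
    exact (sᶜ.orderIsoOfFin hp a).2
  · intro hx
    exact ⟨(sᶜ.orderIsoOfFin hp).symm ⟨x, hx⟩, by simp [complSumEquiv_inl]⟩

theorem sumCongrHom_range_iff {α β : Type*} [Finite α] [Finite β] (σ : Perm (α ⊕ β)) :
    σ ∈ (Perm.sumCongrHom α β).range ↔ ∀ a, ∃ a', Sum.inl a' = σ (Sum.inl a) := by
  constructor
  · rintro ⟨τ, rfl⟩ a
    exact ⟨τ.1 a, rfl⟩
  · intro h
    refine Perm.mem_sumCongrHom_range_of_perm_mapsTo_inl ?_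
    rintro _ ⟨a, rfl⟩
    exact h a

/-- Listings of the subsets of cardinality `q`, each preceded by its complement, represent every
coset of the block permutations exactly once. -/
theorem existsUnique_complSumEquiv {p q n : ℕ} (h : p + q = n)
    (hc : ∀ s : {s : Finset (Fin n) // s.card = q}, (s.1ᶜ).card = p)
    (σ : Perm (Fin p ⊕ Fin q)) :
    ∃! s : {s : Finset (Fin n) // s.card = q},
      ((complSumEquiv s.1 s.2 (hc s)).trans (finBlockEquiv h).symm : Perm _)⁻¹ * σ ∈
        (Perm.sumCongrHom (Fin p) (Fin q)).range := by
  let f : Fin p ↪ Fin n := Function.Embedding.inl.trans (σ.trans (finBlockEquiv h)).toEmbedding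
  have key (s : {s : Finset (Fin n) // s.card = q}) :
      ((complSumEquiv s.1 s.2 (hc s)).trans (finBlockEquiv h).symm : Perm _)⁻¹ * σ ∈
        (Perm.sumCongrHom (Fin p) (Fin q)).range ↔ s.1 = (Finset.univ.map f)ᶜ := by
    rw [sumCongrHom_range_iff]
    have h1 (a : Fin p) : (∃ a', Sum.inl a' =
        (((complSumEquiv s.1 s.2 (hc s)).trans (finBlockEquiv h).symm : Perm _)⁻¹ * σ)
          (Sum.inl a)) ↔ f a ∈ s.1ᶜ := by
      rw [Finset.mem_compl, ← exists_complSumEquiv_inl_iff s.1 s.2 (hc s)]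
      refine exists_congr fun a' => ?_
      rw [Perm.mul_apply, Perm.eq_inv_iff_eq, Equiv.trans_apply, Equiv.symm_apply_eq]
      rfl
    simp only [h1]
    rw [eq_compl_comm]
    constructor
    · intro hf
      refine Finset.eq_of_subset_of_card_le ?_ (by simp [hc s])
      intro x hx
      obtain ⟨a, -, rfl⟩ := Finset.mem_map.1 hx
      exact hf a
    · intro hs a
      rw [← hs]
      exact Finset.mem_map_of_mem f (Finset.mem_univ a)
  refine ⟨⟨(Finset.univ.map f)ᶜ, ?_⟩, (key _).2 rfl, fun s hs => Subtype.ext ((key s).1 hs)⟩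
  rw [Finset.card_compl, Finset.card_map, Finset.card_univ, Fintype.card_fin, Fintype.card_fin]
  omega

theorem schurFn_eq_div_diffProd {F : Type*} [Field F] {r : ℕ} (P : Fin r → ℕ)
    (x : Fin r → F) :
    schurFn P x = (Matrix.of fun a b : Fin r => x a ^ (r - 1 - (b : ℕ) + P b)).det / diffProd x :=
  rfl

theorem prod_complSumEquiv {R : Type*} [CommRing R] {p q n : ℕ} (s : Finset (Fin n))
    (hq : s.card = q) (hp : sᶜ.card = p) (x : Fin n → R) :
    ∏ a, ∏ b, (x (complSumEquiv s hq hp (Sum.inl a)) - x (complSumEquiv s hq hp (Sum.inr b))) =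
      ∏ k ∈ s, ∏ l ∈ sᶜ, (x l - x k) := by
  simp only [complSumEquiv_inl, complSumEquiv_inr]
  rw [Finset.prod_comm, ← Finset.prod_coe_sort s, ← (s.orderIsoOfFin hq).toEquiv.prod_comp]
  refine Finset.prod_congr rfl fun b _ => ?_
  rw [← Finset.prod_coe_sort sᶜ, ← (sᶜ.orderIsoOfFin hp).toEquiv.prod_comp]
  rfl

end

theorem gysin_grassmannian_schur {F : Type*} [Field F] (m n : ℕ)
    (hm : 0 < m) (hmn : m < n)
    (t : Fin n → F) (ht : Function.Injective t)
    (J : Fin (n - m) → ℕ) (hJ : Antitone J)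
    (K : Fin m → ℕ) (hK : Antitone K)
    (hJK : m + K ⟨0, hm⟩ ≤ J ⟨n - m - 1, by omega⟩) :
    ∑ s : {s : Finset (Fin n) // s.card = m},
      schurFn J (fun i => t ↑((s.1ᶜ).orderIsoOfFin
            (by rw [Finset.card_compl, s.2, Fintype.card_fin]) i)) *
        schurFn K (fun i => t ↑(s.1.orderIsoOfFin s.2 i)) /
        ∏ k ∈ s.1, ∏ l ∈ s.1ᶜ, (t l - t k) =
      schurFn (fun c : Fin n =>
        if h : (c : ℕ) < n - m then J ⟨c, h⟩ - m
        else K ⟨(c : ℕ) - (n - m), by have := c.isLt; omega⟩) t := by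
  have h : n - m + m = n := by omega
  have hc (s : {s : Finset (Fin n) // s.card = m}) : (s.1ᶜ).card = n - m := by
    rw [Finset.card_compl, s.2, Fintype.card_fin]
  have hJm (i : Fin (n - m)) : m ≤ J i :=
    (Nat.le_of_add_right_le hJK).trans (hJ (Fin.le_def.2 (by simp only; omega)))
  rw [schurFn_eq_div_diffProd _ t, ← Matrix.det_submatrix_equiv_self (finBlockEquiv h),
    Matrix.det_eq_sum_blocks _ (existsUnique_complSumEquiv h hc), Finset.sum_div]
  refine Finset.sum_congr rfl fun s _ => ?_
  have hV := sign_mul_diffProd h (complSumEquiv s.1 s.2 (hc s)) t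
  rw [prod_complSumEquiv] at hV
  rw [schurFn_eq_div_diffProd, schurFn_eq_div_diffProd, div_mul_div_comm, div_div]
  simp only [complSumEquiv_inl, complSumEquiv_inr] at hV
  rw [← hV]
  have hJ' : (Matrix.submatrix (Matrix.of fun a b : Fin n => t a ^ (n - 1 - (b : ℕ) +
      if h : (b : ℕ) < n - m then J ⟨b, h⟩ - m
      else K ⟨(b : ℕ) - (n - m), by have := b.isLt; omega⟩))
      (complSumEquiv s.1 s.2 (hc s) ∘ Sum.inl) (finBlockEquiv h ∘ Sum.inl)) =
      Matrix.of fun a b : Fin (n - m) =>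
        t (s.1ᶜ.orderIsoOfFin (hc s) a) ^ (n - m - 1 - (b : ℕ) + J b) := by
    ext a b
    have hb := b.isLt
    have hJb := hJm b
    simp only [Matrix.submatrix_apply, Matrix.of_apply, Function.comp_apply, complSumEquiv_inl,
      finBlockEquiv_inl_val, hb, dite_true, Fin.eta]
    congr 1
    omega
  have hK' : (Matrix.submatrix (Matrix.of fun a b : Fin n => t a ^ (n - 1 - (b : ℕ) +
      if h : (b : ℕ) < n - m then J ⟨b, h⟩ - m
      else K ⟨(b : ℕ) - (n - m), by have := b.isLt; omega⟩))
      (complSumEquiv s.1 s.2 (hc s) ∘ Sum.inr) (finBlockEquiv h ∘ Sum.inr)) =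
      Matrix.of fun a b : Fin m =>
        t (s.1.orderIsoOfFin s.2 a) ^ (m - 1 - (b : ℕ) + K b) := by
    ext a b
    have hb := b.isLt
    simp only [Matrix.submatrix_apply, Matrix.of_apply, Function.comp_apply, complSumEquiv_inr,
      finBlockEquiv_inr_val, not_lt.2 (Nat.le_add_right _ _), dite_false, Nat.add_sub_cancel_left,
      Fin.eta]
    congr 2
    omega
  have hcomp : finBlockEquiv h ∘ ((complSumEquiv s.1 s.2 (hc s)).trans (finBlockEquiv h).symm) =
      complSumEquiv s.1 s.2 (hc s) := by
    ext i
    simp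
  rw [Matrix.submatrix_submatrix, Matrix.submatrix_submatrix, ← Function.comp_assoc,
    ← Function.comp_assoc, hcomp, hJ', hK']
  rcases Int.units_eq_one_or
    (Equiv.Perm.sign ((complSumEquiv s.1 s.2 (hc s)).trans (finBlockEquiv h).symm))
    with hs | hs <;> simp [hs, div_neg, neg_div]
end
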